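/- Let q and A be invertible elements of the field M = RatFunc(RatFunc ℚ) as in the context, let m be a natural number, W = 2m+5, and let t ∈ M be arbitrary (t plays the role of the free coefficient a_{[2,2]}). Define a_{[3,1]} = −(t·q² + q^{2m+3}(1+q²+q⁴+q⁶+q⁸) − q^{11+4m}(1+q²)) / ((1−q+q²)(1+q+q²)) and a_{[2,1,1]} = −(1+q² − q^{2+2m}(1+q²+q⁴+q⁶+q⁸) + t·q^{11+4m}) / (q^{9+4m}(1−q+q²)(1+q+q²)). Then the character expansion A^{−W}( q^{W}·S*_{[4]} + a_{[3,1]}·S*_{[3,1]} + t·S*_{[2,2]} + a_{[2,1,1]}·S*_{[2,1,1]} − q^{−W}·S*_{[1,1,1,1]} ) equals the differential expansion 1 + (A²−q²)(A²−q⁴)(A²−q^{−2})(A²−q^{−4})·F_m, where F_m = −Σ_{j=0}^m ([2j+4]_q[j+3]_q[j+1]_q/([3]_q[4]_q))·A^{−2j−8}; in particular the result is independent of t. -/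

import Mathlib

/-- The field `M = RatFunc (RatFunc ℚ)`; `q` and `A` are its two distinguished
invertible elements. -/
noncomputable abbrev Mf : Type := RatFunc (RatFunc ℚ)

/-- The element `q` of `M`. -/
noncomputable def qv : Mf := RatFunc.C RatFunc.X

/-- The element `A` of `M`. -/
noncomputable def Av : Mf := RatFunc.X

/-- `{x} = x − x^{−1}`. -/
noncomputable def br (x : Mf) : Mf := x - x⁻¹

/-- The quantum integer `[n]_q = (q^n − q^{−n})/(q − q^{−1})` inside `M`. -/
noncomputable def qint (n : ℤ) : Mf := (qv ^ n - qv ^ (-n)) / (qv - qv⁻¹)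

/-- `S*_{[4]} = {Aq}{Aq²}{Aq³}/({q²}{q³}{q⁴})`. -/
noncomputable def S4 : Mf :=
  br (Av * qv) * br (Av * qv ^ 2) * br (Av * qv ^ 3) / (br (qv ^ 2) * br (qv ^ 3) * br (qv ^ 4))

/-- `S*_{[3,1]} = {Aq}{Aq²}{Aq^{−1}}/({q}{q²}{q⁴})`. -/
noncomputable def S31 : Mf :=
  br (Av * qv) * br (Av * qv ^ 2) * br (Av * qv⁻¹) / (br qv * br (qv ^ 2) * br (qv ^ 4))

/-- `S*_{[2,2]} = {A}{Aq}{Aq^{−1}}/({q²}{q²}{q³})`. -/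
noncomputable def S22 : Mf :=
  br Av * br (Av * qv) * br (Av * qv⁻¹) / (br (qv ^ 2) * br (qv ^ 2) * br (qv ^ 3))

/-- `S*_{[2,1,1]} = {Aq}{Aq^{−1}}{Aq^{−2}}/({q}{q²}{q⁴})`. -/
noncomputable def S211 : Mf :=
  br (Av * qv) * br (Av * qv⁻¹) * br (Av * qv⁻¹ ^ 2) / (br qv * br (qv ^ 2) * br (qv ^ 4))

/-- `S*_{[1,1,1,1]} = {Aq^{−1}}{Aq^{−2}}{Aq^{−3}}/({q²}{q³}{q⁴})`. -/
noncomputable def S1111 : Mf :=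
  br (Av * qv⁻¹) * br (Av * qv⁻¹ ^ 2) * br (Av * qv⁻¹ ^ 3) /
    (br (qv ^ 2) * br (qv ^ 3) * br (qv ^ 4))

/-- `F_m = −Σ_{j=0}^m ([2j+4]_q[j+3]_q[j+1]_q/([3]_q[4]_q))·A^{−2j−8}`. -/
noncomputable def FmM (m : ℕ) : Mf :=
  -∑ j ∈ Finset.range (m + 1),
    (qint (2 * j + 4) * qint (j + 3) * qint (j + 1) / (qint 3 * qint 4)) *
      Av ^ (-(2 * (j : ℤ)) - 8)

set_option linter.unusedVariables false

noncomputable def gB {K : Type*} [Field K] (x : K) : K := x - x⁻¹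
noncomputable def gG {K : Type*} [Field K] (q A X Y t : K) : K :=
  (Y ^ 2 * A ^ 5)⁻¹ * (X ^ 2 * q ^ 5 * (gB (A * q) * gB (A * q ^ 2) * gB (A * q ^ 3) / (gB (q ^ 2) * gB (q ^ 3) * gB (q ^ 4)))
   + -(t * q ^ 2 + X ^ 2 * q ^ 3 * (1 + q ^ 2 + q ^ 4 + q ^ 6 + q ^ 8)
        - q ^ 11 * X ^ 4 * (1 + q ^ 2)) / ((1 - q + q ^ 2) * (1 + q + q ^ 2)) *
     (gB (A * q) * gB (A * q ^ 2) * gB (A * q⁻¹) / (gB q * gB (q ^ 2) * gB (q ^ 4)))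
   + t * (gB A * gB (A * q) * gB (A * q⁻¹) / (gB (q ^ 2) * gB (q ^ 2) * gB (q ^ 3)))
   + -(1 + q ^ 2 - q ^ 2 * X ^ 2 * (1 + q ^ 2 + q ^ 4 + q ^ 6 + q ^ 8)
        + t * (q ^ 11 * X ^ 4)) / (q ^ 9 * X ^ 4 * (1 - q + q ^ 2) * (1 + q + q ^ 2)) *
     (gB (A * q) * gB (A * q⁻¹) * gB (A * q⁻¹ ^ 2) / (gB q * gB (q ^ 2) * gB (q ^ 4)))
   - (X ^ 2 * q ^ 5)⁻¹ * (gB (A * q⁻¹) * gB (A * q⁻¹ ^ 2) * gB (A * q⁻¹ ^ 3) /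
    (gB (q ^ 2) * gB (q ^ 3) * gB (q ^ 4))))

noncomputable def gT {K : Type*} [Field K] (q A X Y : K) : K :=
  (X ^ 2 * q ^ 4 - (X ^ 2 * q ^ 4)⁻¹) * (X * q ^ 3 - (X * q ^ 3)⁻¹) * (X * q - (X * q)⁻¹) /
   ((q - q⁻¹) * (q ^ 3 - (q ^ 3)⁻¹) * (q ^ 4 - (q ^ 4)⁻¹)) * (Y ^ 2 * A ^ 8)⁻¹

noncomputable def gP {K : Type*} [Field K] (q A : K) : K := (A ^ 2 - q ^ 2) * (A ^ 2 - q ^ 4) * (A ^ 2 - (q ^ 2)⁻¹) *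
        (A ^ 2 - (q ^ 4)⁻¹)

lemma gb1 {K : Type*} [Field K] (q A : K) (hq : q ≠ 0) (hA : A ≠ 0) (h1 : q ^ 2 - 1 ≠ 0)
    (h2 : q ^ 2 + 1 ≠ 0) (h3 : 1 - q + q ^ 2 ≠ 0) (h4 : 1 + q + q ^ 2 ≠ 0) (h5 : q ^ 4 + 1 ≠ 0) : gB q = (q ^ 2 - 1) / q := by unfold gB; field_simp
lemma gb2 {K : Type*} [Field K] (q A : K) (hq : q ≠ 0) (hA : A ≠ 0) (h1 : q ^ 2 - 1 ≠ 0)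
    (h2 : q ^ 2 + 1 ≠ 0) (h3 : 1 - q + q ^ 2 ≠ 0) (h4 : 1 + q + q ^ 2 ≠ 0) (h5 : q ^ 4 + 1 ≠ 0) : gB (q ^ 2) = (q ^ 2 - 1) * (q ^ 2 + 1) / q ^ 2 := by unfold gB; field_simp; ring
lemma gb3 {K : Type*} [Field K] (q A : K) (hq : q ≠ 0) (hA : A ≠ 0) (h1 : q ^ 2 - 1 ≠ 0)
    (h2 : q ^ 2 + 1 ≠ 0) (h3 : 1 - q + q ^ 2 ≠ 0) (h4 : 1 + q + q ^ 2 ≠ 0) (h5 : q ^ 4 + 1 ≠ 0) : gB (q ^ 3) = (q ^ 2 - 1) * (1 - q + q ^ 2) * (1 + q + q ^ 2) / q ^ 3 := by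
  unfold gB; field_simp; ring
lemma gb4 {K : Type*} [Field K] (q A : K) (hq : q ≠ 0) (hA : A ≠ 0) (h1 : q ^ 2 - 1 ≠ 0)
    (h2 : q ^ 2 + 1 ≠ 0) (h3 : 1 - q + q ^ 2 ≠ 0) (h4 : 1 + q + q ^ 2 ≠ 0) (h5 : q ^ 4 + 1 ≠ 0) : gB (q ^ 4) = (q ^ 2 - 1) * (q ^ 2 + 1) * (q ^ 4 + 1) / q ^ 4 := by
  unfold gB; field_simp; ring

set_option maxHeartbeats 4000000 in
lemma gtind {K : Type*} [Field K] (q A : K) (hq : q ≠ 0) (hA : A ≠ 0) (h1 : q ^ 2 - 1 ≠ 0)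
    (h2 : q ^ 2 + 1 ≠ 0) (h3 : 1 - q + q ^ 2 ≠ 0) (h4 : 1 + q + q ^ 2 ≠ 0) (h5 : q ^ 4 + 1 ≠ 0) (X Y : K) (hX : X ≠ 0) (hY : Y ≠ 0) (t : K) : gG q A X Y t = gG q A X Y 0 := by
  unfold gG
  rw [gb1 q A, gb2 q A, gb3 q A, gb4 q A] <;> try assumption
  unfold gB
  field_simp
  ring

set_option maxHeartbeats 4000000 in
lemma gstep {K : Type*} [Field K] (q A : K) (hq : q ≠ 0) (hA : A ≠ 0) (h1 : q ^ 2 - 1 ≠ 0)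
    (h2 : q ^ 2 + 1 ≠ 0) (h3 : 1 - q + q ^ 2 ≠ 0) (h4 : 1 + q + q ^ 2 ≠ 0) (h5 : q ^ 4 + 1 ≠ 0) (X Y : K) (hX : X ≠ 0) (hY : Y ≠ 0) : gG q A (X * q) (Y * A) 0 = gG q A X Y 0 - gP q A * gT q A (X * q) (Y * A) := by
  have e1 := gb1 q A hq hA h1 h2 h3 h4 h5
  have e3 := gb3 q A hq hA h1 h2 h3 h4 h5
  have e4 := gb4 q A hq hA h1 h2 h3 h4 h5
  unfold gG gT gP
  rw [gb1 q A, gb2 q A, gb3 q A, gb4 q A] <;> try assumption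
  unfold gB at *
  rw [e1, e3, e4]
  field_simp
  ring

set_option maxHeartbeats 4000000 in
lemma gbase {K : Type*} [Field K] (q A : K) (hq : q ≠ 0) (hA : A ≠ 0) (h1 : q ^ 2 - 1 ≠ 0)
    (h2 : q ^ 2 + 1 ≠ 0) (h3 : 1 - q + q ^ 2 ≠ 0) (h4 : 1 + q + q ^ 2 ≠ 0) (h5 : q ^ 4 + 1 ≠ 0) : gG q A 1 1 0 = 1 - gP q A * gT q A 1 1 := by
  have e1 := gb1 q A hq hA h1 h2 h3 h4 h5
  have e3 := gb3 q A hq hA h1 h2 h3 h4 h5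
  have e4 := gb4 q A hq hA h1 h2 h3 h4 h5
  unfold gG gT gP
  rw [gb1 q A, gb2 q A, gb3 q A, gb4 q A] <;> try assumption
  unfold gB at *
  rw [e1, e3, e4]
  field_simp
  ring

lemma qv_poly_ne (p : Polynomial ℚ) (hp : p ≠ 0) :
    (RatFunc.C (algebraMap (Polynomial ℚ) (RatFunc ℚ) p) : Mf) ≠ 0 := by
  rw [Ne, map_eq_zero]
  exact RatFunc.algebraMap_ne_zero hp

lemma qv_ne : qv ≠ 0 := by
  have := qv_poly_ne Polynomial.X Polynomial.X_ne_zero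
  simpa [qv] using this

lemma Av_ne : Av ≠ 0 := RatFunc.X_ne_zero

lemma poly_ne_of_eval (p : Polynomial ℚ) (h : p.eval 2 ≠ 0) : p ≠ 0 := by
  rintro rfl; simp at h

lemma qv_h1 : qv ^ 2 - 1 ≠ 0 := by
  have := qv_poly_ne (Polynomial.X ^ 2 - 1) (poly_ne_of_eval _ (by norm_num))
  simpa [qv] using this
lemma qv_h2 : qv ^ 2 + 1 ≠ 0 := by
  have := qv_poly_ne (Polynomial.X ^ 2 + 1) (poly_ne_of_eval _ (by norm_num))
  simpa [qv] using this
lemma qv_h3 : 1 - qv + qv ^ 2 ≠ 0 := by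
  have := qv_poly_ne (1 - Polynomial.X + Polynomial.X ^ 2) (poly_ne_of_eval _ (by norm_num))
  simpa [qv] using this
lemma qv_h4 : 1 + qv + qv ^ 2 ≠ 0 := by
  have := qv_poly_ne (1 + Polynomial.X + Polynomial.X ^ 2) (poly_ne_of_eval _ (by norm_num))
  simpa [qv] using this
lemma qv_h5 : qv ^ 4 + 1 ≠ 0 := by
  have := qv_poly_ne (Polynomial.X ^ 4 + 1) (poly_ne_of_eval _ (by norm_num))
  simpa [qv] using this

lemma term_eq (j : ℕ) :
    (qint (2 * j + 4) * qint (j + 3) * qint (j + 1) / (qint 3 * qint 4)) *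
      Av ^ (-(2 * (j : ℤ)) - 8) = gT qv Av (qv ^ j) (Av ^ j) := by
  have hq := qv_ne
  have hA := Av_ne
  have e1 : qv ^ (2 * (j : ℤ) + 4) = (qv ^ j) ^ 2 * qv ^ 4 := by
    rw [← pow_mul, ← pow_add, ← zpow_natCast]; congr 1; push_cast; ring
  have e2 : qv ^ ((j : ℤ) + 3) = qv ^ j * qv ^ 3 := by
    rw [← pow_add, ← zpow_natCast]; congr 1
  have e3 : qv ^ ((j : ℤ) + 1) = qv ^ j * qv := by
    rw [← pow_succ, ← zpow_natCast]; congr 1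
  have e4 : Av ^ (-(2 * (j : ℤ)) - 8) = ((Av ^ j) ^ 2 * Av ^ 8)⁻¹ := by
    rw [← pow_mul, ← pow_add, ← zpow_natCast, ← zpow_neg]; congr 1; push_cast; ring
  have e5 : qv ^ (3 : ℤ) = qv ^ 3 := by norm_cast
  have e6 : qv ^ (4 : ℤ) = qv ^ 4 := by norm_cast
  have h0 : qv - qv⁻¹ ≠ 0 := by
    have := gb1 qv Av hq hA qv_h1 qv_h2 qv_h3 qv_h4 qv_h5
    unfold gB at this
    rw [this]
    exact div_ne_zero qv_h1 hq
  unfold qint gT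
  simp only [zpow_neg, e1, e2, e3, e4, e5, e6]
  generalize qv - qv⁻¹ = d at *
  generalize (qv ^ 3 - (qv ^ 3)⁻¹) = a
  generalize (qv ^ 4 - (qv ^ 4)⁻¹) = b
  congr 1
  simp only [div_eq_mul_inv, mul_inv, inv_inv]
  have hd : d * d⁻¹ = 1 := mul_inv_cancel₀ h0
  grind

lemma G_sum (m : ℕ) : gG qv Av (qv ^ m) (Av ^ m) 0 = 1 + gP qv Av * FmM m := by
  unfold FmM
  simp only [term_eq]
  induction m with
  | zero =>
    have := gbase qv Av qv_ne Av_ne qv_h1 qv_h2 qv_h3 qv_h4 qv_h5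
    simp [this, sub_eq_add_neg]
  | succ m ih =>
    rw [Finset.sum_range_succ, pow_succ, pow_succ,
      gstep qv Av qv_ne Av_ne qv_h1 qv_h2 qv_h3 qv_h4 qv_h5 _ _ (pow_ne_zero _ qv_ne)
        (pow_ne_zero _ Av_ne), ih]
    ring

/-- The character expansion with coefficients `a_{[4]} = q^W`, `a_{[1,1,1,1]} = −q^{−W}`,
the stated `a_{[3,1]}`, `a_{[2,1,1]}` and free coefficient `t = a_{[2,2]}`, `W = 2m+5`,
equals the differential expansion `1 + P·F_m`; in particular it is independent of `t`. -/
theorem stmt9 (m : ℕ) (t a31 a211 : Mf)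
    (h31 : a31 = -(t * qv ^ 2 + qv ^ (2 * m + 3) * (1 + qv ^ 2 + qv ^ 4 + qv ^ 6 + qv ^ 8)
        - qv ^ (11 + 4 * m) * (1 + qv ^ 2)) /
      ((1 - qv + qv ^ 2) * (1 + qv + qv ^ 2)))
    (h211 : a211 = -(1 + qv ^ 2 - qv ^ (2 + 2 * m) * (1 + qv ^ 2 + qv ^ 4 + qv ^ 6 + qv ^ 8)
        + t * qv ^ (11 + 4 * m)) /
      (qv ^ (9 + 4 * m) * (1 - qv + qv ^ 2) * (1 + qv + qv ^ 2))) :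
    Av ^ (-(2 * (m : ℤ) + 5)) *
      (qv ^ (2 * (m : ℤ) + 5) * S4 + a31 * S31 + t * S22 + a211 * S211 -
        qv ^ (-(2 * (m : ℤ) + 5)) * S1111) =
    1 + (Av ^ 2 - qv ^ 2) * (Av ^ 2 - qv ^ 4) * (Av ^ 2 - qv ^ (-2 : ℤ)) *
        (Av ^ 2 - qv ^ (-4 : ℤ)) * FmM m := by
  have e1 : qv ^ (2 * (m : ℤ) + 5) = (qv ^ m) ^ 2 * qv ^ 5 := by
    rw [← pow_mul, ← pow_add, ← zpow_natCast]; congr 1; push_cast; ring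
  have e2 : Av ^ (2 * (m : ℤ) + 5) = (Av ^ m) ^ 2 * Av ^ 5 := by
    rw [← pow_mul, ← pow_add, ← zpow_natCast]; congr 1; push_cast; ring
  have f1 : qv ^ (2 * m + 3) = (qv ^ m) ^ 2 * qv ^ 3 := by ring
  have f2 : qv ^ (11 + 4 * m) = qv ^ 11 * (qv ^ m) ^ 4 := by ring
  have f3 : qv ^ (2 + 2 * m) = qv ^ 2 * (qv ^ m) ^ 2 := by ring
  have f4 : qv ^ (9 + 4 * m) = qv ^ 9 * (qv ^ m) ^ 4 := by ring
  have hL := (gtind qv Av qv_ne Av_ne qv_h1 qv_h2 qv_h3 qv_h4 qv_h5 _ _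
    (pow_ne_zero m qv_ne) (pow_ne_zero m Av_ne) t).trans (G_sum m)
  have g1 : qv ^ (-2 : ℤ) = (qv ^ 2)⁻¹ := by rw [zpow_neg]; norm_cast
  have g2 : qv ^ (-4 : ℤ) = (qv ^ 4)⁻¹ := by rw [zpow_neg]; norm_cast
  rw [h31, h211, f1, f2, f3, f4, zpow_neg, zpow_neg, e1, e2, g1, g2]
  exact hL
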